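/- (Theorem 1, external angle exponent.) Define G(x) = (2/√π) ∫_0^x e^{−y²} dy. Fix W > 0, C > 0 and D₁, D₂ > 0. For each n ≥ 1 let r₁(n), r₂(n) be natural numbers with r₁(n)/n → D₁ and r₂(n)/n → D₂, set ξ_n = √(Cn), and define γ_n = (ξ_n/√π) ∫_0^∞ e^{−ξ_n² x²} G(x)^{r₁(n)} G(Wx)^{r₂(n)} dx. Then lim_{n→∞} −(1/n) log γ_n = C x₀² − D₁ log G(x₀) − D₂ log G(W x₀), where x₀ is the unique positive solution of 2C − D₁ g(x)/(x G(x)) − D₂ W g(Wx)/(x G(Wx)) = 0 with g(x) = (2/√π) e^{−x²}. -/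

import Mathlib

open Filter Topology

/-- The error-function normalization `G(x) = (2/√π) ∫_0^x e^{−y²} dy`. -/
noncomputable def erfG (x : ℝ) : ℝ := (2 / Real.sqrt Real.pi) * ∫ y in (0:ℝ)..x, Real.exp (-y ^ 2)

/-- `g(x) = (2/√π) e^{−x²}`, the derivative of `erfG`. -/
noncomputable def erfg (x : ℝ) : ℝ := (2 / Real.sqrt Real.pi) * Real.exp (-x ^ 2)


lemma aux_cont : Continuous (fun y : ℝ => Real.exp (-y ^ 2)) := by fun_prop

lemma erfG_sub (a b : ℝ) :
    erfG b - erfG a = (2 / Real.sqrt Real.pi) * ∫ y in a..b, Real.exp (-y ^ 2) := by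
  unfold erfG
  rw [← mul_sub, intervalIntegral.integral_interval_sub_left]
  · exact aux_cont.intervalIntegrable _ _
  · exact aux_cont.intervalIntegrable _ _

lemma aux_cpos : 0 < 2 / Real.sqrt Real.pi := by
  have := Real.pi_pos
  positivity

lemma erfG_mono : Monotone erfG := by
  intro a b hab
  have h := erfG_sub a b
  have h2 : 0 ≤ ∫ y in a..b, Real.exp (-y ^ 2) :=
    intervalIntegral.integral_nonneg hab (fun y _ => (Real.exp_pos _).le)
  have := mul_nonneg aux_cpos.le h2
  linarith

lemma erfG_pos {x : ℝ} (hx : 0 < x) : 0 < erfG x := by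
  unfold erfG
  refine mul_pos aux_cpos ?_
  exact intervalIntegral.intervalIntegral_pos_of_pos (aux_cont.intervalIntegrable _ _)
    (fun y => Real.exp_pos _) hx

lemma erfG_cont : Continuous erfG := by
  unfold erfG
  refine continuous_const.mul ?_
  exact intervalIntegral.continuous_primitive (fun a b => aux_cont.intervalIntegrable a b) 0

lemma erfG_le_lin {x z : ℝ} (hx : 0 < x) (hz : 0 < z) :
    erfG x ≤ erfG z + erfg z * (x - z) := by
  have h := erfG_sub z x
  have key : ∫ y in z..x, Real.exp (-y ^ 2) ≤ Real.exp (-z ^ 2) * (x - z) := by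
    rcases le_total z x with hzx | hxz
    · have := intervalIntegral.integral_mono_on (μ := MeasureTheory.volume) hzx
        (aux_cont.intervalIntegrable z x)
        (continuous_const.intervalIntegrable z x : IntervalIntegrable
          (fun _ : ℝ => Real.exp (-z ^ 2)) _ z x)
        (fun y hy => by
          apply Real.exp_le_exp.mpr
          have := hy.1
          nlinarith)
      rw [intervalIntegral.integral_const, smul_eq_mul] at this
      linarith
    · have := intervalIntegral.integral_mono_on (μ := MeasureTheory.volume) hxz
        (continuous_const.intervalIntegrable x z : IntervalIntegrable
          (fun _ : ℝ => Real.exp (-z ^ 2)) _ x z)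
        (aux_cont.intervalIntegrable x z)
        (fun y hy => by
          apply Real.exp_le_exp.mpr
          have := hy.1
          have := hy.2
          nlinarith)
      rw [intervalIntegral.integral_const, smul_eq_mul] at this
      rw [intervalIntegral.integral_symm]
      linarith
  have := mul_le_mul_of_nonneg_left key aux_cpos.le
  unfold erfg
  linarith

lemma erfG_le_exp {x z : ℝ} (hx : 0 < x) (hz : 0 < z) :
    erfG x ≤ Real.exp (Real.log (erfG z) + erfg z / erfG z * (x - z)) := by
  have hp := erfG_pos hz
  rw [Real.exp_add, Real.exp_log hp]
  have h1 := Real.add_one_le_exp (erfg z / erfG z * (x - z))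
  have h2 := mul_le_mul_of_nonneg_left h1 hp.le
  have h3 := erfG_le_lin hx hz
  have h4 : erfG z * (erfg z / erfG z * (x - z) + 1) = erfG z + erfg z * (x - z) := by
    field_simp
    ring
  linarith

lemma gauss_int (c b x₀ K : ℝ) (hc : 0 < c) :
    MeasureTheory.Integrable (fun x : ℝ => Real.exp (-c * x ^ 2 + b * (x - x₀) + K)) ∧
    ∫ x : ℝ, Real.exp (-c * x ^ 2 + b * (x - x₀) + K) =
      Real.exp (K - b * x₀ + b ^ 2 / (4 * c)) * Real.sqrt (Real.pi / c) := by
  have e : (fun x : ℝ => Real.exp (-c * x ^ 2 + b * (x - x₀) + K)) =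
      fun x => Real.exp (K - b * x₀ + b ^ 2 / (4 * c)) *
        (fun t : ℝ => Real.exp (-c * t ^ 2)) (x - b / (2 * c)) := by
    funext x
    simp only
    rw [← Real.exp_add]
    congr 1
    field_simp
    ring
  rw [e]
  constructor
  · exact ((integrable_exp_neg_mul_sq hc).comp_sub_right _).const_mul _
  · rw [MeasureTheory.integral_const_mul, MeasureTheory.integral_sub_right_eq_self
      (fun t : ℝ => Real.exp (-c * t ^ 2)), integral_gaussian]

lemma integrand_le {W x₀ c x : ℝ} (hW : 0 < W) (hx₀ : 0 < x₀) (hx : 0 < x) (p q : ℕ) :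
    Real.exp (-c * x ^ 2) * erfG x ^ p * erfG (W * x) ^ q ≤
    Real.exp (-c * x ^ 2 + (p * (erfg x₀ / erfG x₀) +
      q * (W * (erfg (W * x₀) / erfG (W * x₀)))) * (x - x₀) +
      (p * Real.log (erfG x₀) + q * Real.log (erfG (W * x₀)))) := by
  have h1 := pow_le_pow_left₀ (erfG_pos hx).le (erfG_le_exp hx hx₀) p
  have h2 := pow_le_pow_left₀ (erfG_pos (mul_pos hW hx)).le
    (erfG_le_exp (mul_pos hW hx) (mul_pos hW hx₀)) q
  rw [← Real.exp_nat_mul] at h1 h2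
  have h0 := (erfG_pos hx).le
  have h0' := (erfG_pos (mul_pos hW hx)).le
  calc _ ≤ Real.exp (-c * x ^ 2) * _ * _ :=
        mul_le_mul (mul_le_mul_of_nonneg_left h1 (Real.exp_pos _).le) h2 (by positivity)
          (by positivity)
    _ = _ := by
      rw [← Real.exp_add, ← Real.exp_add]
      congr 1
      ring

lemma integrand_int {W x₀ c : ℝ} (hW : 0 < W) (hx₀ : 0 < x₀) (hc : 0 < c) (p q : ℕ) :
    MeasureTheory.IntegrableOn
      (fun x => Real.exp (-c * x ^ 2) * erfG x ^ p * erfG (W * x) ^ q) (Set.Ioi 0) := by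
  refine MeasureTheory.Integrable.mono' (gauss_int c (p * (erfg x₀ / erfG x₀) +
      q * (W * (erfg (W * x₀) / erfG (W * x₀)))) x₀
      (p * Real.log (erfG x₀) + q * Real.log (erfG (W * x₀))) hc).1.integrableOn ?_ ?_
  · have := erfG_cont
    exact Continuous.aestronglyMeasurable (by fun_prop)
  · refine (MeasureTheory.ae_restrict_iff' measurableSet_Ioi).mpr (Eventually.of_forall ?_)
    intro x hx
    have hx : 0 < x := hx
    have h0 := (erfG_pos hx).le
    have h0' := (erfG_pos (mul_pos hW hx)).le
    rw [Real.norm_of_nonneg (by positivity)]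
    exact integrand_le hW hx₀ hx p q

lemma upper {W x₀ c : ℝ} (hW : 0 < W) (hx₀ : 0 < x₀) (hc : 0 < c) (p q : ℕ) (b K : ℝ)
    (hb : b = p * (erfg x₀ / erfG x₀) + q * (W * (erfg (W * x₀) / erfG (W * x₀))))
    (hK : K = p * Real.log (erfG x₀) + q * Real.log (erfG (W * x₀))) :
    ∫ x in Set.Ioi (0:ℝ), Real.exp (-c * x ^ 2) * erfG x ^ p * erfG (W * x) ^ q ≤
      Real.exp (K - b * x₀ + b ^ 2 / (4 * c)) * Real.sqrt (Real.pi / c) := by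
  obtain ⟨hi, he⟩ := gauss_int c b x₀ K hc
  rw [← he]
  refine le_trans (MeasureTheory.setIntegral_mono_on (integrand_int hW hx₀ hc p q)
    hi.integrableOn measurableSet_Ioi (fun x hx => ?_))
    (MeasureTheory.setIntegral_le_integral hi (Eventually.of_forall fun x => (Real.exp_pos _).le))
  rw [hb, hK]
  exact integrand_le hW hx₀ hx p q

lemma lower {W x₀ c d : ℝ} (hW : 0 < W) (hx₀ : 0 < x₀) (hc : 0 < c) (hd : 0 < d) (p q : ℕ) (K : ℝ)
    (hK : K = p * Real.log (erfG x₀) + q * Real.log (erfG (W * x₀))) :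
    d * Real.exp (-c * (x₀ + d) ^ 2 + K) ≤
    ∫ x in Set.Ioi (0:ℝ), Real.exp (-c * x ^ 2) * erfG x ^ p * erfG (W * x) ^ q := by
  have hI := integrand_int hW hx₀ hc p q
  have hsub : Set.Ioc x₀ (x₀ + d) ⊆ Set.Ioi 0 := fun x hx => lt_trans hx₀ hx.1
  have h1 := MeasureTheory.setIntegral_mono_set hI (by
    refine (MeasureTheory.ae_restrict_iff' measurableSet_Ioi).mpr (Eventually.of_forall ?_)
    intro x hx
    have hx : 0 < x := hx
    have h0 := (erfG_pos hx).le
    have h0' := (erfG_pos (mul_pos hW hx)).le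
    simp only [Pi.zero_apply]
    positivity) (LE.le.eventuallyLE hsub)
  refine le_trans ?_ h1
  have h2 : ∫ x in Set.Ioc x₀ (x₀ + d), Real.exp (-c * (x₀ + d) ^ 2 + K) =
      d * Real.exp (-c * (x₀ + d) ^ 2 + K) := by
    rw [MeasureTheory.setIntegral_const]
    simp [MeasureTheory.measureReal_def, hd.le]
  rw [← h2]
  refine MeasureTheory.setIntegral_mono_on (by simp) (hI.mono_set hsub) measurableSet_Ioc ?_
  intro x hx
  have hxp : 0 < x := hsub hx
  have a1 := erfG_pos hx₀
  have a2 := erfG_pos (mul_pos hW hx₀)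
  have e1 : erfG x₀ ^ p ≤ erfG x ^ p := pow_le_pow_left₀ a1.le (erfG_mono hx.1.le) p
  have e2 : erfG (W * x₀) ^ q ≤ erfG (W * x) ^ q :=
    pow_le_pow_left₀ a2.le (erfG_mono (mul_le_mul_of_nonneg_left hx.1.le hW.le)) q
  have e3 : Real.exp (-c * (x₀ + d) ^ 2) ≤ Real.exp (-c * x ^ 2) := by
    apply Real.exp_le_exp.mpr
    have : x ^ 2 ≤ (x₀ + d) ^ 2 := pow_le_pow_left₀ hxp.le hx.2 2
    nlinarith
  have e4 : Real.exp (-c * (x₀ + d) ^ 2 + K) =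
      Real.exp (-c * (x₀ + d) ^ 2) * erfG x₀ ^ p * erfG (W * x₀) ^ q := by
    rw [hK, Real.exp_add, Real.exp_add, Real.exp_nat_mul, Real.exp_nat_mul, Real.exp_log a1,
      Real.exp_log a2, mul_assoc]
  rw [e4]
  have h0 := (erfG_pos hxp).le
  exact mul_le_mul (mul_le_mul e3 e1 (by positivity) (by positivity)) e2 (by positivity)
    (by positivity)

/-- Theorem 1 of the paper, external angle exponent: with
`γ_n = (ξ_n/√π) ∫_0^∞ e^{−ξ_n²x²} G(x)^{r₁(n)} G(Wx)^{r₂(n)} dx`, `ξ_n = √(Cn)`,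
`r₁(n)/n → D₁`, `r₂(n)/n → D₂`, one has
`−(1/n) log γ_n → C x₀² − D₁ log G(x₀) − D₂ log G(W x₀)`,
where `x₀ > 0` is the unique positive solution of
`2C − D₁ g(x)/(xG(x)) − D₂ W g(Wx)/(xG(Wx)) = 0`. -/
theorem external_angle_exponent_limit
    (C W D₁ D₂ : ℝ) (hC : 0 < C) (hW : 0 < W) (hD₁ : 0 < D₁) (hD₂ : 0 < D₂)
    (r₁ r₂ : ℕ → ℕ)
    (hr₁ : Tendsto (fun n : ℕ => (r₁ n : ℝ) / n) atTop (𝓝 D₁))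
    (hr₂ : Tendsto (fun n : ℕ => (r₂ n : ℝ) / n) atTop (𝓝 D₂))
    (γ : ℕ → ℝ)
    (hγ : ∀ n : ℕ, 1 ≤ n → γ n =
      (Real.sqrt (C * n) / Real.sqrt Real.pi) *
        ∫ x in Set.Ioi (0 : ℝ),
          Real.exp (-(Real.sqrt (C * n)) ^ 2 * x ^ 2) *
            (erfG x) ^ (r₁ n) * (erfG (W * x)) ^ (r₂ n))
    (x₀ : ℝ) (hx₀pos : 0 < x₀)
    (hx₀ : 2 * C - D₁ * erfg x₀ / (x₀ * erfG x₀)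
        - D₂ * W * erfg (W * x₀) / (x₀ * erfG (W * x₀)) = 0) :
    Tendsto (fun n : ℕ => -(1 / (n : ℝ)) * Real.log (γ n)) atTop
      (𝓝 (C * x₀ ^ 2 - D₁ * Real.log (erfG x₀) - D₂ * Real.log (erfG (W * x₀)))) := by
  set a₁ := Real.log (erfG x₀) with ha₁
  set a₂ := Real.log (erfG (W * x₀)) with ha₂
  set h₁ := erfg x₀ / erfG x₀ with hh₁
  set h₂ := W * (erfg (W * x₀) / erfG (W * x₀)) with hh₂
  have p1 := erfG_pos hx₀pos
  have p2 := erfG_pos (mul_pos hW hx₀pos)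
  have hcrit : D₁ * h₁ + D₂ * h₂ = 2 * C * x₀ := by
    have e : D₁ * h₁ + D₂ * h₂ = x₀ * (D₁ * erfg x₀ / (x₀ * erfG x₀)
        + D₂ * W * erfg (W * x₀) / (x₀ * erfG (W * x₀))) := by
      rw [hh₁, hh₂]
      field_simp
    rw [e]
    have : D₁ * erfg x₀ / (x₀ * erfG x₀)
        + D₂ * W * erfg (W * x₀) / (x₀ * erfG (W * x₀)) = 2 * C := by linarith
    rw [this]
    ring
  have hinv : Tendsto (fun n : ℕ => 1 / (n : ℝ)) atTop (𝓝 0) := tendsto_one_div_atTop_nhds_zero_nat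
  have hlog : Tendsto (fun n : ℕ => Real.log n / (n : ℝ)) atTop (𝓝 0) :=
    (Real.isLittleO_log_id_atTop.tendsto_div_nhds_zero).comp tendsto_natCast_atTop_atTop
  have hK := (hr₁.mul_const a₁).add (hr₂.mul_const a₂)
  have hb := (hr₁.mul_const h₁).add (hr₂.mul_const h₂)
  have hlo := ((hb.mul_const x₀).sub hK).sub ((hb.pow 2).div_const (4 * C))
  have hup := (((((tendsto_const_nhds (x := x₀)).add hinv).pow 2).const_mul C).sub hK).sub
    ((hinv.mul_const (Real.log (C / Real.pi) / 2)).sub (hlog.mul_const (1 / 2)))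
  have main : ∀ n : ℕ, 1 ≤ n →
      (Real.exp ((r₁ n * a₁ + r₂ n * a₂) - (r₁ n * h₁ + r₂ n * h₂) * x₀ +
        (r₁ n * h₁ + r₂ n * h₂) ^ 2 / (4 * (C * n))) ≥ γ n) ∧
      (Real.exp (Real.log (C / Real.pi) / 2 - Real.log n / 2 - C * n * (x₀ + 1 / n) ^ 2 +
        (r₁ n * a₁ + r₂ n * a₂)) ≤ γ n) := by
    intro n hn
    have hn0 : (0 : ℝ) < n := by exact_mod_cast hn
    have hc : 0 < C * n := by positivity
    have hpi := Real.pi_pos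
    have hs : 0 < Real.sqrt (C * n) / Real.sqrt Real.pi := by positivity
    have U := upper hW hx₀pos hc (r₁ n) (r₂ n) _ _ rfl rfl
    have L := lower hW hx₀pos hc (one_div_pos.mpr hn0) (r₁ n) (r₂ n) _ rfl
    have hg := hγ n hn
    rw [Real.sq_sqrt hc.le] at hg
    rw [← ha₁, ← ha₂, ← hh₁, ← hh₂] at U
    have U' := mul_le_mul_of_nonneg_left U hs.le
    have L' := mul_le_mul_of_nonneg_left L hs.le
    rw [← hg] at U' L'
    constructor
    · refine U'.trans (le_of_eq ?_)
      rw [Real.sqrt_div' _ hc.le]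
      have : Real.sqrt (C * n) ≠ 0 := by positivity
      have : Real.sqrt Real.pi ≠ 0 := by positivity
      field_simp
    · refine le_trans (le_of_eq ?_) L'
      have e1 : Real.sqrt (C * n) / Real.sqrt Real.pi * (1 / n) =
          Real.exp (Real.log (C / Real.pi) / 2 - Real.log n / 2) := by
        rw [← Real.exp_log (show 0 < Real.sqrt (C * n) / Real.sqrt Real.pi * (1 / n) by positivity)]
        congr 1
        rw [Real.log_mul (by positivity) (by positivity), Real.log_div (by positivity)
          (by positivity), Real.log_sqrt hc.le, Real.log_sqrt hpi.le, Real.log_mul hC.ne' hn0.ne',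
          Real.log_div hC.ne' hpi.ne', one_div, Real.log_inv]
        ring
      rw [← mul_assoc, e1, ← Real.exp_add]
      congr 1
      ring
  refine tendsto_of_tendsto_of_tendsto_of_le_of_le' (?_ : Tendsto _ _ _) (?_ : Tendsto _ _ _)
    (g := fun n : ℕ => ((r₁ n : ℝ) / n * h₁ + (r₂ n : ℝ) / n * h₂) * x₀ -
      ((r₁ n : ℝ) / n * a₁ + (r₂ n : ℝ) / n * a₂) -
      ((r₁ n : ℝ) / n * h₁ + (r₂ n : ℝ) / n * h₂) ^ 2 / (4 * C))
    (h := fun n : ℕ => C * (x₀ + 1 / (n : ℝ)) ^ 2 -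
      ((r₁ n : ℝ) / n * a₁ + (r₂ n : ℝ) / n * a₂) -
      (1 / (n : ℝ) * (Real.log (C / Real.pi) / 2) - Real.log n / n * (1 / 2))) ?_ ?_
  · convert hlo using 2
    rw [hcrit]
    field_simp
    ring
  · convert hup using 2
    ring
  · filter_upwards [eventually_ge_atTop 1] with n hn
    obtain ⟨u, l⟩ := main n hn
    have hn0 : (0 : ℝ) < n := by exact_mod_cast hn
    have hgp : 0 < γ n := lt_of_lt_of_le (Real.exp_pos _) l
    have u2 := Real.log_le_log hgp u
    rw [Real.log_exp] at u2
    have u3 := mul_le_mul_of_nonneg_left u2 (one_div_pos.mpr hn0).le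
    rw [neg_mul, le_neg]
    refine u3.trans (le_of_eq ?_)
    field_simp
    ring
  · filter_upwards [eventually_ge_atTop 1] with n hn
    obtain ⟨u, l⟩ := main n hn
    have hn0 : (0 : ℝ) < n := by exact_mod_cast hn
    have u2 := Real.log_le_log (Real.exp_pos _) l
    rw [Real.log_exp] at u2
    have u3 := mul_le_mul_of_nonneg_left u2 (one_div_pos.mpr hn0).le
    rw [neg_mul, neg_le]
    refine le_trans (le_of_eq ?_) u3
    field_simp
    ring
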